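/- arXiv:1702.00078 — 4 statements merged into one kernel-verified Lean document; each statement's English description precedes it below -/
import Mathlib

section
/- Let p(a,b|x,y) be a bipartite no-signaling box with Alice inputs x ∈ {1,…,n}, Bob inputs y ∈ {1,…,m}, and finite output sets, and let q(a,b|x,y) be another bipartite no-signaling box with the same inputs and outputs such that the joint Alice–Bob statistics for Bob's input y = 1 agree: q(a,b|x,1) = p(a,b|x,1) for all a, b, x. Then for any family of real coefficients c(a,b,x,y) with |c(a,b,x,y)| ≤ 1, the corresponding Bell quantities β(p) = Σ_{a,b,x,y} c(a,b,x,y)·p(a,b|x,y) and β(q) satisfy |β(p) − β(q)| ≤ n·𝒟, where 𝒟 = Σ_x (1/n) Σ_a p(a|x) Σ_{y ≠ 1} Σ_b |p(b|y,a,x) − q(b|y,a,x)| is the average total disturbance (here p(a|x) = Σ_b p(a,b|x,y) is Alice's marginal, and p(b|y,a,x) = p(a,b|x,y)/p(a|x) is Bob's conditional distribution, with the convention that terms with p(a|x) = 0 are omitted). -/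
/-!
Multiplying Bob's conditional distribution by Alice's marginal returns the joint distribution, and
the two boxes share that marginal, for every input of Bob: it is read off at the input where they
agree and propagated by no-signaling. Hence `n * 𝒟` is exactly the sum of all
`|p(a,b|x,y) - q(a,b|x,y)|`, the terms with `y = 1` being zero, and this ℓ¹ distance dominates the
difference of the values of any Bell expression with coefficients bounded by `1`.
-/

open Finset

/-- A bipartite no-signaling box: nonnegative, normalized conditional distributions whose
Alice marginal is independent of Bob's input and vice versa. -/
def IsNSBox {α β : Type*} [Fintype α] [Fintype β] {n m : ℕ}
    (p : α → β → Fin n → Fin m → ℝ) : Prop :=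
  (∀ a b x y, 0 ≤ p a b x y) ∧
  (∀ x y, ∑ a, ∑ b, p a b x y = 1) ∧
  (∀ a x y y', ∑ b, p a b x y = ∑ b, p a b x y') ∧
  (∀ b y x x', ∑ a, p a b x y = ∑ a, p a b x' y)

section Conditioning

variable {ι K : Type*} [Field K] [LinearOrder K] [IsStrictOrderedRing K] {s : Finset ι}
  {f g : ι → K} {i : ι}

theorem sum_mul_div_sum_cancel (hf : ∀ j ∈ s, 0 ≤ f j) (hi : i ∈ s) :
    (∑ j ∈ s, f j) * (f i / ∑ j ∈ s, f j) = f i :=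
  mul_div_cancel_of_imp' fun hsum => (sum_eq_zero_iff_of_nonneg hf).1 hsum i hi

theorem sum_mul_abs_div_sum_sub_div_sum (hf : ∀ j ∈ s, 0 ≤ f j) (hg : ∀ j ∈ s, 0 ≤ g j)
    (hfg : ∑ j ∈ s, g j = ∑ j ∈ s, f j) (hi : i ∈ s) :
    (∑ j ∈ s, f j) * |f i / (∑ j ∈ s, f j) - g i / (∑ j ∈ s, g j)| = |f i - g i| := by
  have hg_cancel : (∑ j ∈ s, f j) * (g i / ∑ j ∈ s, g j) = g i := by
    rw [← hfg, sum_mul_div_sum_cancel hg hi]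
  calc (∑ j ∈ s, f j) * |f i / (∑ j ∈ s, f j) - g i / (∑ j ∈ s, g j)|
      = |(∑ j ∈ s, f j) * (f i / (∑ j ∈ s, f j) - g i / (∑ j ∈ s, g j))| := by
        rw [abs_mul, abs_of_nonneg (sum_nonneg hf)]
    _ = |f i - g i| := by rw [mul_sub, sum_mul_div_sum_cancel hf hi, hg_cancel]

end Conditioning

section Boxes

variable {α β ξ υ : Type*} [Fintype β]

/-- Alice's marginal `p(a|x)`, computed at Bob's input `y`; it is independent of `y` exactly when
Bob cannot signal to Alice. -/
def aliceMarginal (p : α → β → ξ → υ → ℝ) (a : α) (x : ξ) (y : υ) : ℝ :=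
  ∑ b, p a b x y

/-- Bob's conditional distribution `p(b|y,a,x)`; division by a vanishing marginal gives `0`. -/
noncomputable def bobConditional (p : α → β → ξ → υ → ℝ) (a : α) (b : β) (x : ξ) (y : υ) : ℝ :=
  p a b x y / aliceMarginal p a x y

variable [Fintype α] [Fintype υ]

/-- The total disturbance at Alice's input `x`: the ℓ¹ distance between Bob's conditional
distributions in `p` and `q`, averaged over Alice's outcome and summed over Bob's inputs other
than the reference input `y₀`. -/
noncomputable def disturbance [DecidableEq υ] (y₀ : υ) (p q : α → β → ξ → υ → ℝ) (x : ξ) : ℝ :=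
  ∑ a, aliceMarginal p a x y₀ *
    ∑ y with y ≠ y₀, ∑ b, |bobConditional p a b x y - bobConditional q a b x y|

variable [Fintype ξ]

/-- The total disturbance `𝒟` averaged over uniformly distributed inputs of Alice. -/
noncomputable def averageDisturbance [DecidableEq υ] (y₀ : υ) (p q : α → β → ξ → υ → ℝ) : ℝ :=
  ∑ x, (1 / (Fintype.card ξ : ℝ)) * disturbance y₀ p q x

/-- The value `β(p)` of the Bell expression with coefficients `c`. -/
def bellValue (c p : α → β → ξ → υ → ℝ) : ℝ :=
  ∑ x, ∑ y, ∑ a, ∑ b, c a b x y * p a b x y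

theorem bellValue_sub (c p q : α → β → ξ → υ → ℝ) :
    bellValue c (p - q) = bellValue c p - bellValue c q := by
  simp only [bellValue, Pi.sub_apply, mul_sub, sum_sub_distrib]

theorem abs_bellValue_le_sum_abs {c : α → β → ξ → υ → ℝ} (hc : ∀ a b x y, |c a b x y| ≤ 1)
    (p : α → β → ξ → υ → ℝ) :
    |bellValue c p| ≤ ∑ x, ∑ y, ∑ a, ∑ b, |p a b x y| := by
  refine (abs_sum_le_sum_abs _ _).trans (sum_le_sum fun x _ => ?_)
  refine (abs_sum_le_sum_abs _ _).trans (sum_le_sum fun y _ => ?_)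
  refine (abs_sum_le_sum_abs _ _).trans (sum_le_sum fun a _ => ?_)
  refine (abs_sum_le_sum_abs _ _).trans (sum_le_sum fun b _ => ?_)
  rw [abs_mul]
  exact mul_le_of_le_one_left (abs_nonneg _) (hc a b x y)

theorem card_mul_averageDisturbance [DecidableEq υ] (y₀ : υ) (p q : α → β → ξ → υ → ℝ) :
    (Fintype.card ξ : ℝ) * averageDisturbance y₀ p q = ∑ x, disturbance y₀ p q x := by
  rw [averageDisturbance, mul_sum]
  refine sum_congr rfl fun x _ => ?_
  have hcard : (Fintype.card ξ : ℝ) ≠ 0 :=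
    Nat.cast_ne_zero.2 (Fintype.card_pos_iff.2 ⟨x⟩).ne'
  rw [← mul_assoc, mul_one_div_cancel hcard, one_mul]

end Boxes

section Disturbance

variable {α β ξ υ : Type*} [Fintype β] {p q : α → β → ξ → υ → ℝ} {y₀ : υ}

theorem aliceMarginal_eq_of_agree
    (hp_ns : ∀ a x y y', aliceMarginal p a x y = aliceMarginal p a x y')
    (hq_ns : ∀ a x y y', aliceMarginal q a x y = aliceMarginal q a x y')
    (hagree : ∀ a b x, q a b x y₀ = p a b x y₀) (a : α) (x : ξ) (y : υ) :
    aliceMarginal q a x y = aliceMarginal p a x y :=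
  calc aliceMarginal q a x y = aliceMarginal q a x y₀ := hq_ns a x y y₀
    _ = aliceMarginal p a x y₀ := sum_congr rfl fun b _ => hagree a b x
    _ = aliceMarginal p a x y := hp_ns a x y₀ y

theorem aliceMarginal_mul_abs_bobConditional_sub
    (hp : ∀ a b x y, 0 ≤ p a b x y) (hq : ∀ a b x y, 0 ≤ q a b x y) {a : α} {x : ξ} {y : υ}
    (hmarg : aliceMarginal q a x y = aliceMarginal p a x y) (b : β) :
    aliceMarginal p a x y * |bobConditional p a b x y - bobConditional q a b x y| =
      |p a b x y - q a b x y| :=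
  sum_mul_abs_div_sum_sub_div_sum (f := fun b => p a b x y) (g := fun b => q a b x y)
    (fun b _ => hp a b x y) (fun b _ => hq a b x y) hmarg (mem_univ b)

variable [Fintype α] [Fintype υ] [DecidableEq υ]

theorem disturbance_eq_sum_abs_sub
    (hp : ∀ a b x y, 0 ≤ p a b x y) (hq : ∀ a b x y, 0 ≤ q a b x y)
    (hp_ns : ∀ a x y y', aliceMarginal p a x y = aliceMarginal p a x y')
    (hq_ns : ∀ a x y y', aliceMarginal q a x y = aliceMarginal q a x y')
    (hagree : ∀ a b x, q a b x y₀ = p a b x y₀) (x : ξ) :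
    disturbance y₀ p q x = ∑ y, ∑ a, ∑ b, |p a b x y - q a b x y| := by
  have hmul (a b y) :
      aliceMarginal p a x y₀ * |bobConditional p a b x y - bobConditional q a b x y| =
        |p a b x y - q a b x y| := by
    rw [hp_ns a x y₀ y]
    exact aliceMarginal_mul_abs_bobConditional_sub hp hq
      (aliceMarginal_eq_of_agree hp_ns hq_ns hagree a x y) b
  have hy₀ : ∑ a, ∑ b, |p a b x y₀ - q a b x y₀| = 0 := by
    simp only [hagree, sub_self, abs_zero, sum_const_zero]
  calc disturbance y₀ p q x
      = ∑ a, ∑ y with y ≠ y₀, ∑ b, |p a b x y - q a b x y| := by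
        simp only [disturbance, mul_sum, hmul]
    _ = ∑ y with y ≠ y₀, ∑ a, ∑ b, |p a b x y - q a b x y| := sum_comm
    _ = ∑ y, ∑ a, ∑ b, |p a b x y - q a b x y| := by
        rw [filter_ne']
        exact sum_erase _ hy₀

variable [Fintype ξ]

theorem bell_value_diff_le_n_mul_disturbance_general
    (hp : ∀ a b x y, 0 ≤ p a b x y) (hq : ∀ a b x y, 0 ≤ q a b x y)
    (hp_ns : ∀ a x y y', aliceMarginal p a x y = aliceMarginal p a x y')
    (hq_ns : ∀ a x y y', aliceMarginal q a x y = aliceMarginal q a x y')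
    (hagree : ∀ a b x, q a b x y₀ = p a b x y₀)
    {c : α → β → ξ → υ → ℝ} (hc : ∀ a b x y, |c a b x y| ≤ 1) :
    |bellValue c p - bellValue c q| ≤ Fintype.card ξ * averageDisturbance y₀ p q :=
  calc |bellValue c p - bellValue c q|
      = |bellValue c (p - q)| := by rw [bellValue_sub]
    _ ≤ ∑ x, ∑ y, ∑ a, ∑ b, |p a b x y - q a b x y| := abs_bellValue_le_sum_abs hc (p - q)
    _ = ∑ x, disturbance y₀ p q x :=
        sum_congr rfl fun x _ => (disturbance_eq_sum_abs_sub hp hq hp_ns hq_ns hagree x).symm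
    _ = Fintype.card ξ * averageDisturbance y₀ p q := (card_mul_averageDisturbance y₀ p q).symm

end Disturbance

/-- If two bipartite no-signaling boxes agree on their joint statistics at Bob's input `y = 1`
(here the input `0 : Fin m`), then for any Bell expression with coefficients bounded by `1`
in modulus, the difference of the Bell values is bounded by `n` times the average total
disturbance `𝒟` (conditionals are formed by division, terms with vanishing Alice marginal
contributing `0`). -/
theorem bell_value_diff_le_n_mul_disturbance
    {α β : Type*} [Fintype α] [Fintype β] {n m : ℕ} [NeZero n] [NeZero m]
    (p q : α → β → Fin n → Fin m → ℝ)
    (hp : IsNSBox p) (hq : IsNSBox q)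
    (hagree : ∀ a b x, q a b x 0 = p a b x 0)
    (c : α → β → Fin n → Fin m → ℝ)
    (hc : ∀ a b x y, |c a b x y| ≤ 1) :
    |(∑ x, ∑ y, ∑ a, ∑ b, c a b x y * p a b x y) -
        (∑ x, ∑ y, ∑ a, ∑ b, c a b x y * q a b x y)| ≤
      (n : ℝ) *
        (∑ x, (1 / (n : ℝ)) * ∑ a, (∑ b, p a b x 0) *
          ∑ y ∈ Finset.univ.filter (fun y => y ≠ (0 : Fin m)), ∑ b,
            |p a b x y / (∑ b', p a b' x y) - q a b x y / (∑ b', q a b' x y)|) := by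
  simpa only [bellValue, averageDisturbance, disturbance, bobConditional, aliceMarginal,
      Fintype.card_fin] using
    bell_value_diff_le_n_mul_disturbance_general hp.1 hq.1 hp.2.2.1 hq.2.2.1 hagree hc
end

section
/- Let p̃(a,b,g|x,y) be a tripartite no-signaling box where Alice has inputs x ∈ {1,2}, Bob has inputs y ∈ {1,2}, Grace has a single input, and all outputs are binary (valued in {−1,+1}). Let β_CHSH = ⟨A₁B₁⟩ + ⟨A₁B₂⟩ + ⟨A₂B₁⟩ − ⟨A₂B₂⟩ be the CHSH quantity computed from the Alice–Bob marginal of p̃, and let ⟨B₁ᵍB₁⟩ = Σ_{b,g} b·g·p̃(b,g|y=1) be the correlator between Grace's output and Bob's output at input y = 1, computed from the Bob–Grace marginal. Then β_CHSH + 2⟨B₁ᵍB₁⟩ ≤ 4. -/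
open Finset

/-- The sign `±1` associated with a binary output. -/
def sgn (b : Bool) : ℝ := if b then 1 else -1

/-- A tripartite no-signaling box in which the third party (Grace) holds a single fixed input:
nonnegative, normalized, and every single- and two-party marginal is independent of the
remaining parties' inputs. -/
def IsNS3Box {n m : ℕ} (p : Bool → Bool → Bool → Fin n → Fin m → ℝ) : Prop :=
  (∀ a b g x y, 0 ≤ p a b g x y) ∧
  (∀ x y, ∑ a, ∑ b, ∑ g, p a b g x y = 1) ∧
  (∀ a g x y y', ∑ b, p a b g x y = ∑ b, p a b g x y') ∧
  (∀ b g y x x', ∑ a, p a b g x y = ∑ a, p a b g x' y)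

/-- The correlator `⟨A_x B_y⟩` of the Alice–Bob marginal of a tripartite box. -/
def corrAB {n m : ℕ} (p : Bool → Bool → Bool → Fin n → Fin m → ℝ)
    (x : Fin n) (y : Fin m) : ℝ :=
  ∑ a, ∑ b, sgn a * sgn b * (∑ g, p a b g x y)

/-- The correlator `⟨B₁ᵍ B₁⟩` between Grace's output and Bob's output at Bob's input `y = 1`
(the input `0 : Fin m`), computed from the Bob–Grace marginal. -/
def corrBG {n m : ℕ} [NeZero n] [NeZero m]
    (p : Bool → Bool → Bool → Fin n → Fin m → ℝ) : ℝ :=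
  ∑ b, ∑ g, sgn b * sgn g * (∑ a, p a b g 0 0)

/-!
Three signs satisfy `s t + t u ≤ 1 + s u`, so under any joint distribution of three signs the
correlators satisfy the same inequality. Applied to the outputs at the four pairs of inputs,

* `⟨A₁B₁⟩ + ⟨B₁G⟩ ≤ 1 + ⟨A₁G⟩` and `⟨A₂B₁⟩ + ⟨B₁G⟩ ≤ 1 + ⟨A₂G⟩`,
* `⟨GA₁⟩ + ⟨A₁B₂⟩ ≤ 1 + ⟨GB₂⟩` and `⟨A₂G⟩ + ⟨GB₂⟩ ≤ 1 + ⟨A₂B₂⟩`.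

By no-signaling, each correlator with Grace has the same value wherever it occurs, so the sum of
the four inequalities is the monogamy relation.
-/

lemma sgn_mul_sgn_add_le (s t u : Bool) :
    sgn s * sgn t + sgn t * sgn u ≤ 1 + sgn s * sgn u := by
  cases s <;> cases t <;> cases u <;> norm_num [sgn]

section SignCorr

variable {ι : Type*} [Fintype ι]

/-- The correlator of two sign-valued random variables `u` and `v` on a finite sample space whose
outcomes `i` have weights `w i`. -/
def signCorr (w : ι → ℝ) (u v : ι → Bool) : ℝ :=
  ∑ i, sgn (u i) * sgn (v i) * w i

lemma signCorr_comm (w : ι → ℝ) (u v : ι → Bool) : signCorr w u v = signCorr w v u := by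
  simp only [signCorr, mul_comm (sgn (u _))]

lemma signCorr_add_signCorr_le {w : ι → ℝ} (hw : ∀ i, 0 ≤ w i) (s t u : ι → Bool) :
    signCorr w s t + signCorr w t u ≤ (∑ i, w i) + signCorr w s u := by
  calc signCorr w s t + signCorr w t u
      = ∑ i, (sgn (s i) * sgn (t i) + sgn (t i) * sgn (u i)) * w i := by
        simp only [signCorr, add_mul, sum_add_distrib]
    _ ≤ ∑ i, (1 + sgn (s i) * sgn (u i)) * w i :=
        sum_le_sum fun i _ => mul_le_mul_of_nonneg_right (sgn_mul_sgn_add_le _ _ _) (hw i)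
    _ = (∑ i, w i) + signCorr w s u := by
        simp only [signCorr, add_mul, one_mul, sum_add_distrib]

end SignCorr

section Box

variable {n m : ℕ} (p : Bool → Bool → Bool → Fin n → Fin m → ℝ)

/-- The correlator of Alice's and Grace's outputs when Alice and Bob use the inputs `x` and `y`. -/
def corrAG (x : Fin n) (y : Fin m) : ℝ :=
  ∑ a, ∑ g, sgn a * sgn g * (∑ b, p a b g x y)

/-- The correlator of Bob's and Grace's outputs when Alice and Bob use the inputs `x` and `y`;
`corrBG` is its value when both inputs are `0`. -/
def corrBGAt (x : Fin n) (y : Fin m) : ℝ :=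
  ∑ b, ∑ g, sgn b * sgn g * (∑ a, p a b g x y)

/-- The joint distribution of the triple `(a, b, g)` of outputs at the inputs `x` and `y`. -/
def outputDist (x : Fin n) (y : Fin m) (o : Bool × Bool × Bool) : ℝ :=
  p o.1 o.2.1 o.2.2 x y

lemma corrAB_eq_signCorr (x : Fin n) (y : Fin m) :
    corrAB p x y = signCorr (outputDist p x y) (·.1) (·.2.1) := by
  simp only [corrAB, signCorr, outputDist, Fintype.sum_prod_type, mul_sum]

lemma corrAG_eq_signCorr (x : Fin n) (y : Fin m) :
    corrAG p x y = signCorr (outputDist p x y) (·.1) (·.2.2) := by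
  simp only [corrAG, signCorr, outputDist, Fintype.sum_prod_type, mul_sum]
  exact sum_congr rfl fun _ _ => sum_comm

lemma corrBGAt_eq_signCorr (x : Fin n) (y : Fin m) :
    corrBGAt p x y = signCorr (outputDist p x y) (·.2.1) (·.2.2) := by
  simp only [corrBGAt, signCorr, outputDist, Fintype.sum_prod_type, mul_sum]
  rw [sum_comm_cycle]

end Box

namespace IsNS3Box

variable {n m : ℕ} {p : Bool → Bool → Bool → Fin n → Fin m → ℝ}

lemma corrAG_eq_corrAG (hp : IsNS3Box p) (x : Fin n) (y y' : Fin m) :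
    corrAG p x y = corrAG p x y' := by
  obtain ⟨-, -, alice_grace_marginal, -⟩ := hp
  simp only [corrAG, alice_grace_marginal _ _ x y y']

lemma corrBGAt_eq_corrBGAt (hp : IsNS3Box p) (x x' : Fin n) (y : Fin m) :
    corrBGAt p x y = corrBGAt p x' y := by
  obtain ⟨-, -, -, bob_grace_marginal⟩ := hp
  simp only [corrBGAt, bob_grace_marginal _ _ y x x']

lemma signCorr_outputDist_add_le (hp : IsNS3Box p) (x : Fin n) (y : Fin m)
    (s t u : Bool × Bool × Bool → Bool) :
    signCorr (outputDist p x y) s t + signCorr (outputDist p x y) t u ≤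
      1 + signCorr (outputDist p x y) s u := by
  obtain ⟨nonneg, sum_eq_one, -, -⟩ := hp
  have dist_sum : ∑ o, outputDist p x y o = 1 := by
    simpa only [outputDist, Fintype.sum_prod_type] using sum_eq_one x y
  exact dist_sum ▸ signCorr_add_signCorr_le (fun _ => nonneg _ _ _ _ _) s t u

lemma corrAB_add_corrBGAt_le (hp : IsNS3Box p) (x : Fin n) (y : Fin m) :
    corrAB p x y + corrBGAt p x y ≤ 1 + corrAG p x y := by
  rw [corrAB_eq_signCorr, corrBGAt_eq_signCorr, corrAG_eq_signCorr]
  exact hp.signCorr_outputDist_add_le x y _ _ _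

lemma corrAG_add_corrAB_le (hp : IsNS3Box p) (x : Fin n) (y : Fin m) :
    corrAG p x y + corrAB p x y ≤ 1 + corrBGAt p x y := by
  rw [corrAG_eq_signCorr, corrAB_eq_signCorr, corrBGAt_eq_signCorr,
    signCorr_comm (outputDist p x y) (·.1) (·.2.2),
    signCorr_comm (outputDist p x y) (·.2.1) (·.2.2)]
  exact hp.signCorr_outputDist_add_le x y _ _ _

lemma corrAG_add_corrBGAt_le (hp : IsNS3Box p) (x : Fin n) (y : Fin m) :
    corrAG p x y + corrBGAt p x y ≤ 1 + corrAB p x y := by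
  rw [corrAG_eq_signCorr, corrBGAt_eq_signCorr, corrAB_eq_signCorr,
    signCorr_comm (outputDist p x y) (·.2.1) (·.2.2)]
  exact hp.signCorr_outputDist_add_le x y _ _ _

end IsNS3Box

theorem chsh_monogamy_gentle_general {n m : ℕ} {p : Bool → Bool → Bool → Fin n → Fin m → ℝ}
    (hp : IsNS3Box p) (x x' : Fin n) (y y' : Fin m) :
    (corrAB p x y + corrAB p x y' + corrAB p x' y - corrAB p x' y') + 2 * corrBGAt p x y ≤ 4 := by
  have h₁₁ : corrAB p x y + corrBGAt p x y ≤ 1 + corrAG p x y' :=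
    hp.corrAG_eq_corrAG x y y' ▸ hp.corrAB_add_corrBGAt_le x y
  have h₂₁ : corrAB p x' y + corrBGAt p x y ≤ 1 + corrAG p x' y' :=
    hp.corrAG_eq_corrAG x' y y' ▸ hp.corrBGAt_eq_corrBGAt x x' y ▸
      hp.corrAB_add_corrBGAt_le x' y
  have h₁₂ : corrAG p x y' + corrAB p x y' ≤ 1 + corrBGAt p x' y' :=
    hp.corrBGAt_eq_corrBGAt x x' y' ▸ hp.corrAG_add_corrAB_le x y'
  have h₂₂ : corrAG p x' y' + corrBGAt p x' y' ≤ 1 + corrAB p x' y' :=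
    hp.corrAG_add_corrBGAt_le x' y'
  linarith

/-- Monogamy between the CHSH value of the Alice–Bob marginal and the Grace–Bob correlator
at Bob's first input: `β_CHSH + 2⟨B₁ᵍB₁⟩ ≤ 4` for any tripartite no-signaling box. -/
theorem chsh_monogamy_gentle (p : Bool → Bool → Bool → Fin 2 → Fin 2 → ℝ)
    (hp : IsNS3Box p) :
    (corrAB p 0 0 + corrAB p 0 1 + corrAB p 1 0 - corrAB p 1 1) + 2 * corrBG p ≤ 4 :=
  chsh_monogamy_gentle_general hp 0 1 0 1
end

section
/- Let n, k be positive integers with k ≤ n/2 and k dividing n, and let a : ℤ → {−1,+1} be extended with the sign-flip convention a_{n+m} = −a_m for all m ∈ {1,…,k}, and let b : {1,…,n} → {−1,+1}. Then for all j, l ∈ {1,…,k}: Σ_{i=0}^{(n/k)−2} a_{j+ik+l−1}·(b_{j+ik} + b_{j+(i+1)k}) + a_{j+n−k+l−1}·(b_{j+n−k} − b_j) ≤ 2(n/k − 1). (These k² shifted chain expressions sum to the generalized chain bilinear form Σ_{x,y} C_{x,y} a_x b_y, yielding the classical bound 2kn − 2k².) -/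
open Finset

/-!
Since `|a| ≤ 1`, each term `a i * (b i + b (i + 1))` is at most
`|b i + b (i + 1)| ≤ 2 - |b i - b (i + 1)|`, and by the triangle inequality the deficits
`|b i - b (i + 1)|` along the chain pay for the closing term `a N * (b N - b 0)`.
-/

section OrderedGroup

variable {G : Type*} [AddCommGroup G] [LinearOrder G] [IsOrderedAddMonoid G]

theorem abs_add_add_abs_sub_le_two_nsmul {x y c : G} (hx : |x| ≤ c) (hy : |y| ≤ c) :
    |x + y| + |x - y| ≤ 2 • c := by
  rw [abs_le] at hx hy
  rcases abs_cases (x + y) with ⟨h, -⟩ | ⟨h, -⟩ <;>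
    rcases abs_cases (x - y) with ⟨h', -⟩ | ⟨h', -⟩ <;> grind

theorem abs_sub_le_range_sum_abs_sub (b : ℕ → G) (N : ℕ) :
    |b N - b 0| ≤ ∑ i ∈ range N, |b i - b (i + 1)| := by
  rw [abs_sub_comm, ← sum_range_sub']
  exact abs_sum_le_sum_abs _ _

theorem sum_abs_add_succ_add_abs_sub_le {b : ℕ → G} {c : G} (hb : ∀ i, |b i| ≤ c) (N : ℕ) :
    ∑ i ∈ range N, |b i + b (i + 1)| + |b N - b 0| ≤ (2 * N) • c :=
  calc ∑ i ∈ range N, |b i + b (i + 1)| + |b N - b 0|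
    _ ≤ ∑ i ∈ range N, |b i + b (i + 1)| + ∑ i ∈ range N, |b i - b (i + 1)| := by
      gcongr
      exact abs_sub_le_range_sum_abs_sub b N
    _ = ∑ i ∈ range N, (|b i + b (i + 1)| + |b i - b (i + 1)|) := sum_add_distrib.symm
    _ ≤ #(range N) • (2 • c) :=
      sum_le_card_nsmul _ _ _ fun i _ => abs_add_add_abs_sub_le_two_nsmul (hb i) (hb (i + 1))
    _ = (2 * N) • c := by rw [card_range, mul_nsmul]

end OrderedGroup

section OrderedRing

variable {R : Type*} [Ring R]

/-- The chain Bell expression with `N + 1` settings per party, indexed from `0`, evaluated at local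
values `a`, `b`; the minus sign in the closing term records the sign flip around the chain. -/
def chainExpr (a b : ℕ → R) (N : ℕ) : R :=
  ∑ i ∈ range N, a i * (b i + b (i + 1)) + a N * (b N - b 0)

variable [LinearOrder R] [IsOrderedRing R]

theorem mul_le_abs_of_abs_le_one {x : R} (hx : |x| ≤ 1) (y : R) : x * y ≤ |y| :=
  calc x * y ≤ |x| * |y| := (le_abs_self _).trans_eq (abs_mul x y)
    _ ≤ |y| := mul_le_of_le_one_left (abs_nonneg y) hx

theorem chainExpr_le {a b : ℕ → R} {c : R} (ha : ∀ i, |a i| ≤ 1) (hb : ∀ i, |b i| ≤ c) (N : ℕ) :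
    chainExpr a b N ≤ (2 * N) • c :=
  calc ∑ i ∈ range N, a i * (b i + b (i + 1)) + a N * (b N - b 0)
    _ ≤ ∑ i ∈ range N, |b i + b (i + 1)| + |b N - b 0| := by
      gcongr with i
      · exact mul_le_abs_of_abs_le_one (ha i) _
      · exact mul_le_abs_of_abs_le_one (ha N) _
    _ ≤ (2 * N) • c := sum_abs_add_succ_add_abs_sub_le hb N

theorem shifted_chain_classical_bound_general {n k : ℕ} (hn : 0 < n) (hdvd : k ∣ n)
    {a b : ℤ → R} (ha : ∀ i, |a i| ≤ 1) (hb : ∀ i, |b i| ≤ 1) (j l : ℤ) :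
    (∑ i ∈ range (n / k - 1),
        a (j + (i : ℤ) * k + l - 1) * (b (j + (i : ℤ) * k) + b (j + ((i : ℤ) + 1) * k))) +
      a (j + (n : ℤ) - (k : ℤ) + l - 1) * (b (j + (n : ℤ) - (k : ℤ)) - b j) ≤
    2 * (((n / k : ℕ) : R) - 1) := by
  have hk : 0 < k := Nat.pos_of_dvd_of_pos hdvd hn
  obtain ⟨N, hN⟩ : ∃ N, n / k = N + 1 :=
    Nat.exists_eq_add_one.mpr (Nat.div_pos (Nat.le_of_dvd hn hdvd) hk)
  have last_index : j + (n : ℤ) - k = j + (N : ℤ) * k := by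
    rw [← Nat.div_mul_cancel hdvd, hN]
    push_cast
    ring
  rw [hN, last_index]
  have h := chainExpr_le (a := fun i : ℕ => a (j + i * k + l - 1))
    (b := fun i : ℕ => b (j + i * k)) (fun _ => ha _) (fun _ => hb _) N
  simpa only [chainExpr, Nat.add_sub_cancel, Nat.cast_add, Nat.cast_one, Nat.cast_zero, zero_mul,
    add_zero, add_sub_cancel_right, nsmul_eq_mul, mul_one, Nat.cast_mul, Nat.cast_ofNat] using h

end OrderedRing

/-- Each of the `k²` shifted chain Bell expressions (with `n/k` settings) used to decompose
the generalized chain inequality is bounded by its classical value `2(n/k − 1)` for all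
`±1`-valued assignments `a, b`, where `a` obeys the sign-flip convention
`a_{n+m} = −a_m` for `m ∈ {1,…,k}`. -/
theorem shifted_chain_classical_bound (n k : ℕ) (hk : 0 < k) (hkn : 2 * k ≤ n)
    (hdvd : k ∣ n)
    (a b : ℤ → ℝ)
    (ha : ∀ i, a i = 1 ∨ a i = -1) (hb : ∀ i, b i = 1 ∨ b i = -1)
    (hflip : ∀ m : ℤ, 1 ≤ m → m ≤ (k : ℤ) → a ((n : ℤ) + m) = - a m)
    (j l : ℤ) (hj1 : 1 ≤ j) (hjk : j ≤ (k : ℤ)) (hl1 : 1 ≤ l) (hlk : l ≤ (k : ℤ)) :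
    (∑ i ∈ Finset.range (n / k - 1),
        a (j + (i : ℤ) * k + l - 1) * (b (j + (i : ℤ) * k) + b (j + ((i : ℤ) + 1) * k))) +
      a (j + (n : ℤ) - (k : ℤ) + l - 1) * (b (j + (n : ℤ) - (k : ℤ)) - b j) ≤
    2 * (((n / k : ℕ) : ℝ) - 1) :=
  shifted_chain_classical_bound_general (by omega) hdvd
    (fun i => ((abs_eq zero_le_one).mpr (ha i)).le) (fun i => ((abs_eq zero_le_one).mpr (hb i)).le)
    j l
end

section
/- Let H_A, H_B, H_C be finite-dimensional complex Hilbert spaces and ψ a unit vector in H_A ⊗ H_B ⊗ H_C. Let A₁, A₂ be self-adjoint operators on H_A with A₁² = A₂² = 1, B₁, B₂ self-adjoint operators on H_B with B₁² = B₂² = 1, and G a self-adjoint operator on H_C with G² = 1. Define correlators ⟨A_x B_y⟩ = ⟨ψ, (A_x ⊗ B_y ⊗ 1)ψ⟩ and ⟨B₁G⟩ = ⟨ψ, (1 ⊗ B₁ ⊗ G)ψ⟩, and let β_CHSH = ⟨A₁B₁⟩ + ⟨A₁B₂⟩ + ⟨A₂B₁⟩ − ⟨A₂B₂⟩. Then (β_CHSH)²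 + 4·|⟨B₁G⟩|² ≤ 8. -/
open Matrix Kronecker

/-!
The proof gives the full Toner–Verstraete inequality: if Alice measures `a₀, a₁`, Bob `b₀, b₁` and
Charlie `c₀, c₁`, with CHSH operators `X` (Alice–Bob) and `Z` (Charlie–Bob), then
`⟨X⟩² + ⟨Z⟩² ≤ 8`. The CHSH operator is linear in the first party, so `x X + y Z` is the CHSH
operator of the pair `u = x a + y c`. Its square contains the commutator term `-[u₀, u₁][b₀, b₁]`;
the pair `v₀ = x a₀ - y c₀`, `v₁ = -(x a₁ - y c₁)` has the opposite commutator, and the squares of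
the two CHSH operators add up to `8 (x² + y²)`. Taking `x = ⟨X⟩` and `y = ⟨Z⟩` in
`⟨x X + y Z⟩² ≤ ⟨(x X + y Z)²⟩` gives `(x² + y²)² ≤ 8 (x² + y²)`. If Charlie always measures `G`,
then `⟨Z⟩ = 2⟨B₁G⟩`.
-/

open scoped MatrixOrder ComplexOrder

section Algebra

variable {R : Type*}

/-- The CHSH operator, whose expectation is the CHSH value `β_CHSH`; the argument order is that of
`IsCHSHTuple`. -/
def chshOperator [NonUnitalNonAssocRing R] (a₀ a₁ b₀ b₁ : R) : R :=
  a₀ * b₀ + a₀ * b₁ + a₁ * b₀ - a₁ * b₁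

lemma chshOperator_self_left [NonAssocRing R] (a b₀ b₁ : R) :
    chshOperator a a b₀ b₁ = 2 * (a * b₀) := by
  rw [chshOperator, two_mul]
  abel

lemma chshOperator_smul_add_smul [NonUnitalNonAssocRing R] {S : Type*} [Monoid S]
    [DistribMulAction S R] [IsScalarTower S R R] (x y : S) (a₀ a₁ c₀ c₁ b₀ b₁ : R) :
    chshOperator (x • a₀ + y • c₀) (x • a₁ + y • c₁) b₀ b₁ =
      x • chshOperator a₀ a₁ b₀ b₁ + y • chshOperator c₀ c₁ b₀ b₁ := by
  simp only [chshOperator, add_mul, smul_mul_assoc, smul_add, smul_sub]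
  abel

lemma isCHSHTuple_neg_second [Ring R] [StarRing R] {a₀ a₁ b₀ b₁ : R}
    (h : IsCHSHTuple a₀ a₁ b₀ b₁) : IsCHSHTuple a₀ (-a₁) b₀ b₁ where
  __ := h
  A₁_inv := by rw [neg_sq, h.A₁_inv]
  A₁_sa := by rw [star_neg, h.A₁_sa]
  A₁B₀_commutes := Commute.neg_left h.A₁B₀_commutes
  A₁B₁_commutes := Commute.neg_left h.A₁B₁_commutes

lemma isSelfAdjoint_chshOperator [Ring R] [StarRing R] {a₀ a₁ b₀ b₁ : R}
    (h : IsCHSHTuple a₀ a₁ b₀ b₁) : IsSelfAdjoint (chshOperator a₀ a₁ b₀ b₁) := by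
  simp only [IsSelfAdjoint, chshOperator, star_sub, star_add, star_mul, h.A₀_sa, h.A₁_sa, h.B₀_sa,
    h.B₁_sa, h.A₀B₀_commutes, h.A₀B₁_commutes, h.A₁B₀_commutes, h.A₁B₁_commutes]

lemma mul_add_mul_sq_of_commute [Semiring R] {a₀ a₁ p q : R}
    (h₀p : Commute a₀ p) (h₀q : Commute a₀ q) (h₁p : Commute a₁ p) (h₁q : Commute a₁ q) :
    (a₀ * p + a₁ * q) ^ 2 =
      a₀ ^ 2 * p ^ 2 + a₁ ^ 2 * q ^ 2 + (a₀ * a₁ * (p * q) + a₁ * a₀ * (q * p)) := by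
  simp only [sq, add_mul, mul_add, h₀p.symm.mul_mul_mul_comm, h₁p.symm.mul_mul_mul_comm,
    h₀q.symm.mul_mul_mul_comm, h₁q.symm.mul_mul_mul_comm]
  abel

lemma chshOperator_sq [Ring R] {a₀ a₁ b₀ b₁ : R} (hb₀ : b₀ ^ 2 = 1) (hb₁ : b₁ ^ 2 = 1)
    (h₀₀ : Commute a₀ b₀) (h₀₁ : Commute a₀ b₁) (h₁₀ : Commute a₁ b₀) (h₁₁ : Commute a₁ b₁) :
    chshOperator a₀ a₁ b₀ b₁ ^ 2 =
      a₀ ^ 2 * (b₀ + b₁) ^ 2 + a₁ ^ 2 * (b₀ - b₁) ^ 2 - ⁅a₀, a₁⁆ * ⁅b₀, b₁⁆ := by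
  have hsplit : chshOperator a₀ a₁ b₀ b₁ = a₀ * (b₀ + b₁) + a₁ * (b₀ - b₁) := by
    rw [chshOperator]; noncomm_ring
  have hpq : (b₀ + b₁) * (b₀ - b₁) = -⁅b₀, b₁⁆ := by
    rw [Ring.lie_def, add_mul, mul_sub, mul_sub, ← sq, ← sq, hb₀, hb₁]; abel
  have hqp : (b₀ - b₁) * (b₀ + b₁) = ⁅b₀, b₁⁆ := by
    rw [Ring.lie_def, sub_mul, mul_add, mul_add, ← sq, ← sq, hb₀, hb₁]; abel
  rw [hsplit, mul_add_mul_sq_of_commute (h₀₀.add_right h₀₁) (h₀₀.sub_right h₀₁)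
    (h₁₀.add_right h₁₁) (h₁₀.sub_right h₁₁), hpq, hqp, Ring.lie_def a₀ a₁]
  noncomm_ring

lemma add_sq_add_sub_sq_of_sq_eq_one [Ring R] {b₀ b₁ : R} (hb₀ : b₀ ^ 2 = 1) (hb₁ : b₁ ^ 2 = 1) :
    (b₀ + b₁) ^ 2 + (b₀ - b₁) ^ 2 = 4 := by
  have hparallelogram : (b₀ + b₁) ^ 2 + (b₀ - b₁) ^ 2 = 2 * (b₀ ^ 2 + b₁ ^ 2) := by noncomm_ring
  rw [hparallelogram, hb₀, hb₁]
  norm_num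

variable {S : Type*} [CommRing S] [Ring R] [Algebra S R]

lemma smul_add_sq_add_smul_sub_sq {a c : R} (ha : a ^ 2 = 1) (hc : c ^ 2 = 1) (x y : S) :
    (x • a + y • c) ^ 2 + (x • a - y • c) ^ 2 = (2 * (x ^ 2 + y ^ 2)) • (1 : R) := by
  rw [sq] at ha hc
  simp only [sq, mul_add, add_mul, mul_sub, sub_mul, smul_mul_smul_comm, ha, hc]
  module

lemma lie_smul_add_smul_eq_lie_smul_sub_smul {a₀ a₁ c₀ c₁ : R} (h₀₁ : Commute a₀ c₁)
    (h₁₀ : Commute a₁ c₀) (x y : S) :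
    ⁅x • a₀ + y • c₀, x • a₁ + y • c₁⁆ = ⁅x • a₀ - y • c₀, x • a₁ - y • c₁⁆ := by
  simp only [Ring.lie_def, mul_add, add_mul, mul_sub, sub_mul, smul_mul_smul_comm, h₀₁.eq, h₁₀.eq]
  module

variable [StarRing R] {a₀ a₁ c₀ c₁ b₀ b₁ : R}

lemma smul_chshOperator_add_smul_chshOperator_sq (hab : IsCHSHTuple a₀ a₁ b₀ b₁)
    (hcb : IsCHSHTuple c₀ c₁ b₀ b₁) (x y : S) :
    (x • chshOperator a₀ a₁ b₀ b₁ + y • chshOperator c₀ c₁ b₀ b₁) ^ 2 =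
      (x • a₀ + y • c₀) ^ 2 * (b₀ + b₁) ^ 2 + (x • a₁ + y • c₁) ^ 2 * (b₀ - b₁) ^ 2 -
        ⁅x • a₀ + y • c₀, x • a₁ + y • c₁⁆ * ⁅b₀, b₁⁆ := by
  have hcomm {a c b : R} (ha : Commute a b) (hc : Commute c b) : Commute (x • a + y • c) b :=
    (ha.smul_left x).add_left (hc.smul_left y)
  rw [← chshOperator_smul_add_smul]
  exact chshOperator_sq hab.B₀_inv hab.B₁_inv
    (hcomm hab.A₀B₀_commutes hcb.A₀B₀_commutes) (hcomm hab.A₀B₁_commutes hcb.A₀B₁_commutes)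
    (hcomm hab.A₁B₀_commutes hcb.A₁B₀_commutes) (hcomm hab.A₁B₁_commutes hcb.A₁B₁_commutes)

theorem chshOperator_monogamy_sq_add_sq (hab : IsCHSHTuple a₀ a₁ b₀ b₁)
    (hcb : IsCHSHTuple c₀ c₁ b₀ b₁) (h₀₁ : Commute a₀ c₁) (h₁₀ : Commute a₁ c₀) (x y : S) :
    (x • chshOperator a₀ a₁ b₀ b₁ + y • chshOperator c₀ c₁ b₀ b₁) ^ 2 +
        (x • chshOperator a₀ (-a₁) b₀ b₁ - y • chshOperator c₀ (-c₁) b₀ b₁) ^ 2 =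
      (8 * (x ^ 2 + y ^ 2)) • (1 : R) := by
  set u₀ := x • a₀ + y • c₀
  set u₁ := x • a₁ + y • c₁
  set v₀ := x • a₀ - y • c₀ with hv₀
  set v₁ := x • a₁ - y • c₁ with hv₁
  have hX : (x • chshOperator a₀ a₁ b₀ b₁ + y • chshOperator c₀ c₁ b₀ b₁) ^ 2 =
      u₀ ^ 2 * (b₀ + b₁) ^ 2 + u₁ ^ 2 * (b₀ - b₁) ^ 2 - ⁅u₀, u₁⁆ * ⁅b₀, b₁⁆ :=
    smul_chshOperator_add_smul_chshOperator_sq hab hcb x y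
  have hX' : (x • chshOperator a₀ (-a₁) b₀ b₁ - y • chshOperator c₀ (-c₁) b₀ b₁) ^ 2 =
      v₀ ^ 2 * (b₀ + b₁) ^ 2 + v₁ ^ 2 * (b₀ - b₁) ^ 2 + ⁅u₀, u₁⁆ * ⁅b₀, b₁⁆ := by
    have hneg₀ : x • a₀ + -y • c₀ = v₀ := by rw [hv₀]; module
    have hneg₁ : x • -a₁ + -y • -c₁ = -v₁ := by rw [hv₁]; module
    have hbracket : ⁅v₀, -v₁⁆ = -⁅u₀, u₁⁆ := by
      have hcommutator : ⁅u₀, u₁⁆ = ⁅v₀, v₁⁆ :=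
        lie_smul_add_smul_eq_lie_smul_sub_smul h₀₁ h₁₀ x y
      rw [hcommutator, Ring.lie_def, Ring.lie_def]
      noncomm_ring
    rw [sub_eq_add_neg, ← neg_smul, smul_chshOperator_add_smul_chshOperator_sq
      (isCHSHTuple_neg_second hab) (isCHSHTuple_neg_second hcb), hneg₀, hneg₁, neg_sq, hbracket,
      neg_mul, sub_neg_eq_add]
  calc
    _ = (u₀ ^ 2 + v₀ ^ 2) * (b₀ + b₁) ^ 2 + (u₁ ^ 2 + v₁ ^ 2) * (b₀ - b₁) ^ 2 := by
      rw [hX, hX', add_mul, add_mul]; abel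
    _ = (2 * (x ^ 2 + y ^ 2)) • ((b₀ + b₁) ^ 2 + (b₀ - b₁) ^ 2) := by
      rw [smul_add_sq_add_smul_sub_sq hab.A₀_inv hcb.A₀_inv,
        smul_add_sq_add_smul_sub_sq hab.A₁_inv hcb.A₁_inv, smul_one_mul, smul_one_mul, smul_add]
    _ = (8 * (x ^ 2 + y ^ 2)) • (1 : R) := by
      have hfour : (4 : R) = (4 : S) • 1 := by rw [ofNat_smul_eq_nsmul, nsmul_one, Nat.cast_ofNat]
      rw [add_sq_add_sub_sq_of_sq_eq_one hab.B₀_inv hab.B₁_inv, hfour, smul_smul]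
      ring_nf

end Algebra

section State

variable {R : Type*} [Ring R] [StarRing R] [PartialOrder R] [StarOrderedRing R] [Algebra ℝ R]
  [StarModule ℝ R] {φ : R →ₚ[ℝ] ℝ}

lemma sq_apply_le_apply_sq (hφ : φ 1 = 1) {a : R} (ha : IsSelfAdjoint a) :
    φ a ^ 2 ≤ φ (a ^ 2) := by
  have hexpand : (a - φ a • 1) ^ 2 = a ^ 2 - (2 * φ a) • a + φ a ^ 2 • 1 := by
    simp only [sq, mul_sub, sub_mul, smul_mul_assoc, mul_smul_comm, one_mul, mul_one]
    module
  have hvariance : φ ((a - φ a • 1) ^ 2) = φ (a ^ 2) - φ a ^ 2 := by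
    rw [hexpand, map_add, map_sub, map_smul, map_smul, hφ]
    simp only [smul_eq_mul]
    ring
  have hnonneg : 0 ≤ φ ((a - φ a • 1) ^ 2) :=
    φ.map_nonneg (ha.sub ((IsSelfAdjoint.all _).smul (.one R))).sq_nonneg
  linarith

theorem chsh_quantum_monogamy_general (hφ : φ 1 = 1) {a₀ a₁ c₀ c₁ b₀ b₁ : R}
    (hab : IsCHSHTuple a₀ a₁ b₀ b₁) (hcb : IsCHSHTuple c₀ c₁ b₀ b₁) (h₀₁ : Commute a₀ c₁)
    (h₁₀ : Commute a₁ c₀) :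
    φ (chshOperator a₀ a₁ b₀ b₁) ^ 2 + φ (chshOperator c₀ c₁ b₀ b₁) ^ 2 ≤ 8 := by
  set x := φ (chshOperator a₀ a₁ b₀ b₁) with hx
  set y := φ (chshOperator c₀ c₁ b₀ b₁) with hy
  set L := x • chshOperator a₀ a₁ b₀ b₁ + y • chshOperator c₀ c₁ b₀ b₁ with hL
  set M := x • chshOperator a₀ (-a₁) b₀ b₁ - y • chshOperator c₀ (-c₁) b₀ b₁
  have hsmul {s : R} (r : ℝ) (hs : IsSelfAdjoint s) : IsSelfAdjoint (r • s) :=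
    (IsSelfAdjoint.all r).smul hs
  have hL_sa : IsSelfAdjoint L :=
    (hsmul x (isSelfAdjoint_chshOperator hab)).add (hsmul y (isSelfAdjoint_chshOperator hcb))
  have hM_sa : IsSelfAdjoint M :=
    (hsmul x (isSelfAdjoint_chshOperator (isCHSHTuple_neg_second hab))).sub
      (hsmul y (isSelfAdjoint_chshOperator (isCHSHTuple_neg_second hcb)))
  have hmean : φ L = x ^ 2 + y ^ 2 := by
    rw [hL, map_add, map_smul, map_smul, ← hx, ← hy, smul_eq_mul, smul_eq_mul, sq, sq]
  have hsecond : φ (L ^ 2) + φ (M ^ 2) = 8 * (x ^ 2 + y ^ 2) := by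
    rw [← map_add, chshOperator_monogamy_sq_add_sq hab hcb h₀₁ h₁₀, map_smul, hφ,
      smul_eq_mul, mul_one]
  have hbound : (x ^ 2 + y ^ 2) ^ 2 ≤ 8 * (x ^ 2 + y ^ 2) := by
    have hL_sq : φ L ^ 2 ≤ φ (L ^ 2) := sq_apply_le_apply_sq hφ hL_sa
    have hM_sq : 0 ≤ φ (M ^ 2) := φ.map_nonneg hM_sa.sq_nonneg
    rw [← hmean]
    linarith
  by_contra! hlarge
  nlinarith

end State

section Matrix

variable {m n 𝕜 : Type*} [RCLike 𝕜]

/-- A `±1`-valued observable, that is, a self-adjoint involution. -/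
def IsDichotomic {R : Type*} [MulOneClass R] [Star R] (a : R) : Prop :=
  IsSelfAdjoint a ∧ a * a = 1

lemma IsDichotomic.one {R : Type*} [MulOneClass R] [StarMul R] : IsDichotomic (1 : R) :=
  ⟨.one R, one_mul 1⟩

lemma isCHSHTuple_of_isDichotomic {R : Type*} [Monoid R] [StarMul R] {a b : Fin 2 → R}
    (ha : ∀ x, IsDichotomic (a x)) (hb : ∀ y, IsDichotomic (b y))
    (hab : ∀ x y, Commute (a x) (b y)) : IsCHSHTuple (a 0) (a 1) (b 0) (b 1) where
  A₀_inv := (sq _).trans (ha 0).2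
  A₁_inv := (sq _).trans (ha 1).2
  B₀_inv := (sq _).trans (hb 0).2
  B₁_inv := (sq _).trans (hb 1).2
  A₀_sa := (ha 0).1
  A₁_sa := (ha 1).1
  B₀_sa := (hb 0).1
  B₁_sa := (hb 1).1
  A₀B₀_commutes := hab 0 0
  A₀B₁_commutes := hab 0 1
  A₁B₀_commutes := hab 1 0
  A₁B₁_commutes := hab 1 1

lemma IsDichotomic.kronecker {S : Type*} [CommSemiring S] [StarRing S] [Fintype m] [Fintype n]
    [DecidableEq m] [DecidableEq n] {A : Matrix m m S} {B : Matrix n n S} (hA : IsDichotomic A)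
    (hB : IsDichotomic B) : IsDichotomic (A ⊗ₖ B) := by
  refine ⟨?_, ?_⟩
  · rw [IsSelfAdjoint, star_eq_conjTranspose, conjTranspose_kronecker, ← star_eq_conjTranspose,
      ← star_eq_conjTranspose, hA.1.star_eq, hB.1.star_eq]
  · rw [← mul_kronecker_mul, hA.2, hB.2, one_kronecker_one]

lemma commute_kronecker {S : Type*} [CommSemiring S] [Fintype m] [Fintype n] {A A' : Matrix m m S}
    {B B' : Matrix n n S} (hA : Commute A A') (hB : Commute B B') :
    Commute (A ⊗ₖ B) (A' ⊗ₖ B') := by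
  rw [commute_iff_eq, ← mul_kronecker_mul, ← mul_kronecker_mul, hA.eq, hB.eq]

variable [Fintype n]

/-- The expectation `M ↦ ⟨ψ, M ψ⟩` in the pure state `ψ`. The value is real for Hermitian `M`;
taking its real part makes this a positive functional on all matrices. -/
noncomputable def vectorState (ψ : n → 𝕜) : Matrix n n 𝕜 →ₚ[ℝ] ℝ :=
  .mk₀
    { toFun M := RCLike.re (star ψ ⬝ᵥ (M *ᵥ ψ))
      map_add' M N := by rw [add_mulVec, dotProduct_add, map_add]
      map_smul' r M := by
        rw [smul_mulVec, dotProduct_smul, RCLike.smul_re, RingHom.id_apply, smul_eq_mul] }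
    fun _ hM ↦ hM.posSemidef.re_dotProduct_nonneg ψ

lemma vectorState_apply (ψ : n → 𝕜) (M : Matrix n n 𝕜) :
    vectorState ψ M = RCLike.re (star ψ ⬝ᵥ (M *ᵥ ψ)) :=
  rfl

lemma vectorState_one [DecidableEq n] {ψ : n → 𝕜} (hψ : star ψ ⬝ᵥ ψ = 1) :
    vectorState ψ 1 = 1 := by
  rw [vectorState_apply, one_mulVec, hψ, RCLike.one_re]

lemma norm_sq_dotProduct_mulVec_eq_vectorState_sq {M : Matrix n n 𝕜} (hM : M.IsHermitian)
    (ψ : n → 𝕜) : ‖star ψ ⬝ᵥ (M *ᵥ ψ)‖ ^ 2 = vectorState ψ M ^ 2 := by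
  rw [RCLike.norm_sq_eq_def, hM.im_star_dotProduct_mulVec_self, vectorState_apply]
  ring

end Matrix

/-- Quantum monogamy relation for CHSH: for a tripartite state `ψ` and `±1`-valued
(self-adjoint, squaring to the identity) observables `A₁, A₂` for Alice, `B₁, B₂` for Bob
and `G` for the third party, `(β_CHSH)² + 4|⟨B₁G⟩|² ≤ 8`. -/
theorem chsh_quantum_monogamy (dA dB dC : ℕ)
    (ψ : Fin dA × Fin dB × Fin dC → ℂ) (hψ : star ψ ⬝ᵥ ψ = 1)
    (A : Fin 2 → Matrix (Fin dA) (Fin dA) ℂ)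
    (B : Fin 2 → Matrix (Fin dB) (Fin dB) ℂ)
    (G : Matrix (Fin dC) (Fin dC) ℂ)
    (hA : ∀ x, (A x).IsHermitian ∧ A x * A x = 1)
    (hB : ∀ y, (B y).IsHermitian ∧ B y * B y = 1)
    (hG : G.IsHermitian ∧ G * G = 1)
    (E : Fin 2 → Fin 2 → ℝ)
    (hE : ∀ x y, E x y =
      (star ψ ⬝ᵥ ((A x ⊗ₖ (B y ⊗ₖ (1 : Matrix (Fin dC) (Fin dC) ℂ))).mulVec ψ)).re)
    (bg : ℂ)
    (hbg : bg = star ψ ⬝ᵥ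
      (((1 : Matrix (Fin dA) (Fin dA) ℂ) ⊗ₖ (B 0 ⊗ₖ G)).mulVec ψ)) :
    (E 0 0 + E 0 1 + E 1 0 - E 1 1) ^ 2 + 4 * ‖bg‖ ^ 2 ≤ 8 := by
  let a x := A x ⊗ₖ (1 : Matrix (Fin dB × Fin dC) (Fin dB × Fin dC) ℂ)
  let b y := (1 : Matrix (Fin dA) (Fin dA) ℂ) ⊗ₖ (B y ⊗ₖ (1 : Matrix (Fin dC) (Fin dC) ℂ))
  let g := (1 : Matrix (Fin dA) (Fin dA) ℂ) ⊗ₖ ((1 : Matrix (Fin dB) (Fin dB) ℂ) ⊗ₖ G)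
  have ha x : IsDichotomic (a x) := .kronecker (hA x) .one
  have hb y : IsDichotomic (b y) := .kronecker .one (.kronecker (hB y) .one)
  have hg : IsDichotomic g := .kronecker .one (.kronecker .one hG)
  have hab x y : Commute (a x) (b y) := commute_kronecker (.one_right _) (.one_left _)
  have hag x : Commute (a x) g := commute_kronecker (.one_right _) (.one_left _)
  have hgb y : Commute g (b y) :=
    commute_kronecker (.one_left _) (commute_kronecker (.one_left _) (.one_right _))
  have hE_state x y : E x y = vectorState ψ (a x * b y) := by
    simp only [hE, a, b, ← mul_kronecker_mul, one_mul, mul_one, vectorState_apply,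
      RCLike.re_to_complex]
  have hbg_state : ‖bg‖ ^ 2 = vectorState ψ (g * b 0) ^ 2 := by
    rw [← norm_sq_dotProduct_mulVec_eq_vectorState_sq ((hg.1.commute_iff (hb 0).1).1 (hgb 0))]
    simp only [hbg, g, b, ← mul_kronecker_mul, one_mul, mul_one]
  have hmonogamy := chsh_quantum_monogamy_general (vectorState_one hψ)
    (isCHSHTuple_of_isDichotomic ha hb hab)
    (isCHSHTuple_of_isDichotomic (fun _ ↦ hg) hb fun _ ↦ hgb) (hag 0) (hag 1)
  rw [chshOperator_self_left, two_mul, map_add] at hmonogamy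
  simp only [chshOperator, map_add, map_sub, ← hE_state] at hmonogamy
  linarith
end
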